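/- Let M be a finitely generated free ℤ-module, ω : M × M → ℤ an alternating bilinear form with radical R = {m ∈ M : ω(m, ·) = 0}, ψ_c an automorphism of M preserving ω, and ψ' : M → ℤ a linear map vanishing on ker(ψ_c − id) ∩ R. Let I be the image of ψ_c − id, let J ≤ M be transversal to I, and let K = ker(ψ_c − id). Assume ω induces a non-degenerate form on M/R. Then the set {j ↦ 2ω(k, j) − ψ'(k) : k ∈ K} is a submodule of the module of affine maps J → ℤ of rank equal to rank(K) − rank(K ∩ R), and the only constant function it contains is the zero function. -/

import Mathlib

/-!
A vector `k` fixed by the isometry `ψ` is orthogonal to the image `I` of `ψ - id`, because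
`ω k (ψ m) = ω (ψ k) (ψ m) = ω k m`. If the map `j ↦ 2 ω(k, j) - ψ'(k)` is constant on `J`, then
comparing its values with that at `0` shows that `k` is orthogonal to `J` too, hence to `I + J`.
As `M / (I + J)` is torsion, `k` then lies in the radical `R`, where the map is zero since `ψ'`
vanishes on fixed vectors of `R`. So the only constant map obtained is zero, the linear map
`k ↦ (j ↦ 2 ω(k, j) - ψ'(k))` on the fixed vectors `K` has kernel `K ∩ R`, and the rank of its image
is given by rank-nullity.
-/

open Module

theorem finrank_map_add_finrank_inf_ker {A M N : Type*} [CommRing A] [IsDomain A]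
    [AddCommGroup M] [Module A M] [Module.Finite A M] [AddCommGroup N] [Module A N]
    (K : Submodule A M) (f : M →ₗ[A] N) :
    finrank A (K.map f) + finrank A ↥(K ⊓ LinearMap.ker f) = finrank A K := by
  have rank_lt (S : Submodule A M) : Module.rank A S < Cardinal.aleph0 :=
    S.rank_le.trans_lt (rank_lt_aleph0 A M)
  have ker_equiv : LinearMap.ker (f.domRestrict K) ≃ₗ[A] ↥(K ⊓ LinearMap.ker f) :=
    (LinearEquiv.ofEq _ _ (by ext; simp)).trans
      (Submodule.comapSubtypeEquivOfLe (inf_le_left : K ⊓ LinearMap.ker f ≤ K))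
  have rank_nullity := (f.domRestrict K).lift_rank_range_add_rank_ker
  rw [LinearMap.range_domRestrict, ker_equiv.rank_eq] at rank_nullity
  have rank_map_lt : Cardinal.lift (Module.rank A (K.map f)) < Cardinal.aleph0 :=
    (lift_rank_map_le f K).trans_lt (Cardinal.lift_lt_aleph0.mpr (rank_lt K))
  simpa [finrank, Cardinal.toNat_add rank_map_lt (Cardinal.lift_lt_aleph0.mpr (rank_lt _))] using
    congrArg Cardinal.toNat rank_nullity

theorem isTorsion_quotient_of_index_ne_zero {M : Type*} [AddCommGroup M]
    {S : Submodule ℤ M} (hS : S.toAddSubgroup.index ≠ 0) : IsTorsion ℤ (M ⧸ S) := by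
  have : Finite (M ⧸ S) := AddSubgroup.index_ne_zero_iff_finite.mp hS
  exact isAddTorsion_iff_isTorsion_int.mp isAddTorsion_of_finite

section CommRing

variable {A M : Type*} [CommRing A] [AddCommGroup M] [Module A M]

theorem linearMap_eq_zero_of_le_ker_of_isTorsion_quotient {N : Type*} [AddCommGroup N] [Module A N]
    [IsTorsionFree A N] {S : Submodule A M} {f : M →ₗ[A] N} (hS : IsTorsion A (M ⧸ S))
    (hf : S ≤ LinearMap.ker f) : f = 0 := by
  ext m
  obtain ⟨a, ha⟩ := @hS (Submodule.Quotient.mk m)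
  have smul_mem : (a : A) • m ∈ S := (Submodule.Quotient.mk_eq_zero S).mp ha
  have smul_apply_eq_zero : (a : A) • f m = 0 := by simpa using hf smul_mem
  exact (isRegular_iff_mem_nonZeroDivisors.mpr a.2).isSMulRegular.right_eq_zero_of_smul
    smul_apply_eq_zero

variable {ω : M →ₗ[A] M →ₗ[A] A} {ψ : M →ₗ[A] M} {J : Submodule A M} {k : M}

theorem range_sub_id_le_ker_of_mem_ker_sub_id (hψ : ∀ a b, ω (ψ a) (ψ b) = ω a b)
    (hk : k ∈ LinearMap.ker (ψ - LinearMap.id)) :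
    LinearMap.range (ψ - LinearMap.id) ≤ LinearMap.ker (ω k) := by
  have fixed : ψ k = k := by simpa [sub_eq_zero] using hk
  rintro _ ⟨m, rfl⟩
  have invariant : ω k (ψ m) = ω k m := by simpa only [fixed] using hψ k m
  simp [invariant]

theorem mem_ker_form_of_mem_ker_sub_id (hψ : ∀ a b, ω (ψ a) (ψ b) = ω a b)
    (hJ : IsTorsion A (M ⧸ (LinearMap.range (ψ - LinearMap.id) ⊔ J)))
    (hk : k ∈ LinearMap.ker (ψ - LinearMap.id)) (hkJ : J ≤ LinearMap.ker (ω k)) :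
    k ∈ LinearMap.ker ω :=
  linearMap_eq_zero_of_le_ker_of_isTorsion_quotient hJ
    (sup_le (range_sub_id_le_ker_of_mem_ker_sub_id hψ hk) hkJ)

/-- The linear map sending `k` to the function `j ↦ 2 ω(k, j) - φ(k)` on `J`. Its values are affine
maps, encoded as plain functions `J → A`. -/
def formAffineMap (ω : M →ₗ[A] M →ₗ[A] A) (φ : M →ₗ[A] A) (J : Submodule A M) :
    M →ₗ[A] (J → A) :=
  LinearMap.pi fun j => (2 : A) • ω.flip j - φ

variable {φ : M →ₗ[A] A}

theorem formAffineMap_apply (k : M) :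
    formAffineMap ω φ J k = fun j : J => 2 * ω k j - φ k := by
  ext j
  simp [formAffineMap]

theorem exists_formAffineMap_eq_linear_add_const (k : M) :
    ∃ (l : J →ₗ[A] A) (c : A), formAffineMap ω φ J k = fun j => l j + c :=
  ⟨(2 : A) • (ω k).domRestrict J, -φ k, by simp [formAffineMap_apply, sub_eq_add_neg]⟩

theorem formAffineMap_eq_zero_of_mem_ker (hk : k ∈ LinearMap.ker ω) (hφk : φ k = 0) :
    formAffineMap ω φ J k = 0 := by
  ext j
  simp [formAffineMap_apply, LinearMap.mem_ker.mp hk, hφk]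

variable [NoZeroDivisors A] [NeZero (2 : A)]

theorem le_ker_of_formAffineMap_eq_const {c : A} (h : formAffineMap ω φ J k = fun _ => c) :
    J ≤ LinearMap.ker (ω k) := by
  intro j hj
  rw [formAffineMap_apply] at h
  have value_at_zero : -φ k = c := by simpa using congrFun h 0
  have value_at_j : 2 * ω k j - φ k = c := congrFun h ⟨j, hj⟩
  have two_mul_eq_zero : 2 * ω k j = 0 := by linear_combination value_at_j - value_at_zero
  exact (mul_eq_zero.mp two_mul_eq_zero).resolve_left two_ne_zero

theorem mem_ker_form_of_formAffineMap_eq_const (hψ : ∀ a b, ω (ψ a) (ψ b) = ω a b)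
    (hJ : IsTorsion A (M ⧸ (LinearMap.range (ψ - LinearMap.id) ⊔ J)))
    (hk : k ∈ LinearMap.ker (ψ - LinearMap.id)) {c : A}
    (h : formAffineMap ω φ J k = fun _ => c) : k ∈ LinearMap.ker ω :=
  mem_ker_form_of_mem_ker_sub_id hψ hJ hk (le_ker_of_formAffineMap_eq_const h)

theorem ker_sub_id_inf_ker_formAffineMap (hψ : ∀ a b, ω (ψ a) (ψ b) = ω a b)
    (hφ : ∀ k ∈ LinearMap.ker (ψ - LinearMap.id) ⊓ LinearMap.ker ω, φ k = 0)
    (hJ : IsTorsion A (M ⧸ (LinearMap.range (ψ - LinearMap.id) ⊔ J))) :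
    LinearMap.ker (ψ - LinearMap.id) ⊓ LinearMap.ker (formAffineMap ω φ J) =
      LinearMap.ker (ψ - LinearMap.id) ⊓ LinearMap.ker ω := by
  ext k
  refine and_congr_right fun hk => ⟨fun h => ?_, fun h => ?_⟩
  · exact mem_ker_form_of_formAffineMap_eq_const hψ hJ hk (c := 0) h
  · exact formAffineMap_eq_zero_of_mem_ker h (hφ k ⟨hk, h⟩)

end CommRing

theorem kernel_affine_maps_rank_general {A M : Type*} [CommRing A] [IsDomain A] [NeZero (2 : A)]
    [AddCommGroup M] [Module A M] [Module.Finite A M] (ω : M →ₗ[A] M →ₗ[A] A)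
    (ψ : M →ₗ[A] M) (hψ : ∀ a b, ω (ψ a) (ψ b) = ω a b) (φ : M →ₗ[A] A)
    (hφ : ∀ k ∈ LinearMap.ker (ψ - LinearMap.id) ⊓ LinearMap.ker ω, φ k = 0)
    (J : Submodule A M) (hJ : IsTorsion A (M ⧸ (LinearMap.range (ψ - LinearMap.id) ⊔ J))) :
    ∃ T : Submodule A (J → A),
      (T : Set (J → A)) =
        {f | ∃ k ∈ LinearMap.ker (ψ - LinearMap.id), f = fun j : J => 2 * ω k j - φ k} ∧
      (∀ f ∈ T, ∃ (l : J →ₗ[A] A) (c : A), f = fun j => l j + c) ∧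
      finrank A T = finrank A (LinearMap.ker (ψ - LinearMap.id)) -
        finrank A ↥(LinearMap.ker (ψ - LinearMap.id) ⊓ LinearMap.ker ω) ∧
      (∀ f ∈ T, (∃ c : A, f = fun _ => c) → f = 0) := by
  refine ⟨(LinearMap.ker (ψ - LinearMap.id)).map (formAffineMap ω φ J), ?_, ?_, ?_, ?_⟩
  · ext f
    simp only [Submodule.map_coe, Set.mem_image, SetLike.mem_coe, formAffineMap_apply,
      Set.mem_ofPred_eq, eq_comm]
  · rintro _ ⟨k, -, rfl⟩
    exact exists_formAffineMap_eq_linear_add_const k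
  · rw [← ker_sub_id_inf_ker_formAffineMap hψ hφ hJ]
    exact Nat.eq_sub_of_add_eq (finrank_map_add_finrank_inf_ker _ _)
  · rintro _ ⟨k, hk, rfl⟩ ⟨c, hc⟩
    have hkω := mem_ker_form_of_formAffineMap_eq_const hψ hJ hk hc
    exact formAffineMap_eq_zero_of_mem_ker hkω (hφ k ⟨hk, hkω⟩)

/-- The maps `j ↦ 2 ω(k, j) − ψ'(k)`, for `k` in the kernel of `ψ_c − id`, form a
submodule of the affine maps `J → ℤ` of rank `rank K − rank (K ⊓ R)`, containing no
nonzero constant function. -/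
theorem kernel_affine_maps_rank
    (M : Type*) [AddCommGroup M] [Module ℤ M] [Module.Free ℤ M] [Module.Finite ℤ M]
    (ω : M →ₗ[ℤ] M →ₗ[ℤ] ℤ)
    (halt : ∀ a : M, ω a a = 0)
    (ψc : M ≃ₗ[ℤ] M) (hpres : ∀ a b : M, ω (ψc a) (ψc b) = ω a b)
    (ψ' : M →ₗ[ℤ] ℤ)
    (R : Submodule ℤ M) (hR : ∀ m : M, m ∈ R ↔ ∀ m' : M, ω m m' = 0)
    (hψ' : ∀ k ∈ LinearMap.ker (ψc.toLinearMap - LinearMap.id) ⊓ R, ψ' k = 0)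
    (J : Submodule ℤ M)
    (hIJ : LinearMap.range (ψc.toLinearMap - LinearMap.id) ⊓ J = ⊥)
    (hindex : (LinearMap.range (ψc.toLinearMap - LinearMap.id) ⊔ J).toAddSubgroup.index ≠ 0) :
    ∃ T : Submodule ℤ (↥J → ℤ),
      (T : Set (↥J → ℤ)) =
        {f | ∃ k ∈ LinearMap.ker (ψc.toLinearMap - LinearMap.id),
          f = fun j : ↥J => 2 * ω k j - ψ' k} ∧
      (∀ f ∈ T, ∃ (φ : ↥J →ₗ[ℤ] ℤ) (c : ℤ), f = fun j => φ j + c) ∧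
      Module.finrank ℤ ↥T =
        Module.finrank ℤ ↥(LinearMap.ker (ψc.toLinearMap - LinearMap.id)) -
          Module.finrank ℤ ↥(LinearMap.ker (ψc.toLinearMap - LinearMap.id) ⊓ R) ∧
      (∀ f ∈ T, (∃ c : ℤ, f = fun _ => c) → f = 0) := by
  -- `finrank ℤ` of a submodule elaborates above with `AddCommGroup.toIntModule`.
  obtain rfl : ‹Module ℤ M› = AddCommGroup.toIntModule M := Subsingleton.elim _ _
  obtain rfl : R = LinearMap.ker ω := by ext; simp [hR, LinearMap.ext_iff]
  exact kernel_affine_maps_rank_general ω ψc hpres ψ' hψ' J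
    (isTorsion_quotient_of_index_ne_zero hindex)
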